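/- Let δ ≥ k ≥ 3 and n ≥ F(k,δ). Let G be a connected graph in A₂(n,k,δ) with q(G) > n−1 and let x be the positive eigenvector of Q(G) corresponding to q(G). If Y₁ ≠ ∅, then x_i > x_j for all i ∈ Y₁ and all j ∈ Z₁. -/

import Mathlib

/-!
Write `q` for the `Q`-index and `S` for the sum of all entries of `x`. A vertex `i` adjacent to
all others satisfies `(q - n + 2) x_i = S`. Any vertex `v` satisfies `(q - d(v) + 1) x_v ≤ S`,
because its neighbours lie in the complement of `{v}` and `x` is positive. A vertex `j` of `Z` is
not adjacent to the vertices of `X`, so `d(j) < n - 1` and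
`(q - n + 2) x_j < (q - d(j) + 1) x_j ≤ S = (q - n + 2) x_i`; now divide by `q - n + 2 > 0`.
-/

open Finset Matrix

attribute [local instance] Classical.propDecidable

namespace QGraph

variable {V : Type*} [Fintype V] [DecidableEq V]

/-- The signless Laplacian matrix `Q(G) = D(G) + A(G)` of a simple graph. -/
noncomputable def qMatrix (G : SimpleGraph V) : Matrix V V ℝ :=
  Matrix.of fun i j =>
    (if i = j then (G.degree i : ℝ) else 0) + (if G.Adj i j then 1 else 0)

/-- The `Q`-index of `G`: the largest eigenvalue of `Q(G)`. -/
noncomputable def qIndex (G : SimpleGraph V) : ℝ :=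
  sSup {μ : ℝ | ∃ x : V → ℝ, x ≠ 0 ∧ qMatrix G *ᵥ x = μ • x}

/-- `G` is `k`-connected: it has more than `k` vertices and removing fewer
than `k` vertices leaves a connected graph. -/
def IsKConnected (G : SimpleGraph V) (k : ℕ) : Prop :=
  k < Fintype.card V ∧
    ∀ S : Finset V, S.card < k → (G.induce ((↑S : Set V)ᶜ)).Connected

/-- The graph `A(n,k,δ) = K_{k-1} ∨ (K_{δ-k+2} ∪ K_{n-δ-1})`. -/
def graphA (n k δ : ℕ) : SimpleGraph (Fin n) :=
  SimpleGraph.fromRel fun i j =>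
    (i : ℕ) < k - 1 ∨ (j : ℕ) < k - 1 ∨
    (k - 1 ≤ (i : ℕ) ∧ (i : ℕ) < δ + 1 ∧ k - 1 ≤ (j : ℕ) ∧ (j : ℕ) < δ + 1) ∨
    (δ + 1 ≤ (i : ℕ) ∧ δ + 1 ≤ (j : ℕ))

/-- `X`: the vertices of degree `δ` in `A(n,k,δ)`. -/
def inX (n k δ : ℕ) (v : Fin n) : Prop := k - 1 ≤ (v : ℕ) ∧ (v : ℕ) < δ + 1

/-- `Y`: the `k-1` join vertices (degree `n-1`) of `A(n,k,δ)`. -/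
def inY (n k : ℕ) (v : Fin n) : Prop := (v : ℕ) < k - 1

/-- `Z`: the vertices of degree `n-δ+k-3` in `A(n,k,δ)`. -/
def inZ (n δ : ℕ) (v : Fin n) : Prop := δ + 1 ≤ (v : ℕ)

noncomputable def F (k δ : ℕ) : ℝ :=
  ((k : ℝ) ^ 2 + 2 * k - 3) * (δ : ℝ) ^ 2
    - (2 * (k : ℝ) ^ 3 - (k : ℝ) ^ 2 - 17 * k + 8) * (δ : ℝ)
    + ((k : ℝ) ^ 4 - 3 * (k : ℝ) ^ 3 - 8 * (k : ℝ) ^ 2 + 23 * k + 4)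

/-- `E'` is a set of edges of `A(n,k,δ)` with both endpoints in `Y ∪ Z`. -/
def EdgeConds (n k δ : ℕ) (E' : Finset (Sym2 (Fin n))) : Prop :=
  (↑E' : Set (Sym2 (Fin n))) ⊆ (graphA n k δ).edgeSet ∧
    ∀ e ∈ E', ∀ v ∈ e, inY n k v ∨ inZ n δ v

/-- Membership (up to isomorphism) in the family `𝒜₁(n,k,δ)`. -/
def memA1 (n k δ : ℕ) (G : SimpleGraph (Fin n)) : Prop :=
  ∃ E' : Finset (Sym2 (Fin n)), EdgeConds n k δ E' ∧
    E'.card ≤ (δ - k + 2) * (k - 1) / 4 ∧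
    Nonempty (G ≃g (graphA n k δ).deleteEdges (↑E' : Set (Sym2 (Fin n))))

/-- Conditions defining a concrete member of `𝒜₂(n,k,δ)`. -/
def A2Conds (n k δ : ℕ) (E' : Finset (Sym2 (Fin n))) : Prop :=
  EdgeConds n k δ E' ∧ E'.card = (δ - k + 2) * (k - 1) / 4 + 1

/-- Membership (up to isomorphism) in the family `𝒜₂(n,k,δ)`. -/
def memA2 (n k δ : ℕ) (G : SimpleGraph (Fin n)) : Prop :=
  ∃ E' : Finset (Sym2 (Fin n)), A2Conds n k δ E' ∧
    Nonempty (G ≃g (graphA n k δ).deleteEdges (↑E' : Set (Sym2 (Fin n))))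

/-- The number of edges of `G` with both endpoints satisfying `P`. -/
noncomputable def edgesWithin (G : SimpleGraph V) (P : V → Prop) : ℕ :=
  (G.edgeFinset.filter fun e => ∀ v ∈ e, P v).card

/-- The entry of `Q(G) x` at a vertex; for an eigenvector this gives the eigenvalue equation there. -/
theorem qMatrix_mulVec_apply (G : SimpleGraph V) (x : V → ℝ) (v : V) :
    (qMatrix G *ᵥ x) v = G.degree v * x v + ∑ u, if G.Adj v u then x u else 0 := by
  simp [qMatrix, Matrix.mulVec, dotProduct, add_mul, Finset.sum_add_distrib]

/-- Lemma 3.6(3). Let `G` be a connected member of `𝒜₂(n,k,δ)` with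
`q(G) > n-1`, and `x` the positive eigenvector of `Q(G)`. If `Y₁ ≠ ∅` then `x_i > x_j`
for all `i ∈ Y₁` and `j ∈ Z₁`. -/
theorem stmt13 (n k δ : ℕ) (hk : 3 ≤ k) (hδk : k ≤ δ) (hn : (n : ℝ) ≥ F k δ)
    (E' : Finset (Sym2 (Fin n))) (hE : A2Conds n k δ E')
    (G : SimpleGraph (Fin n))
    (hG : G = (graphA n k δ).deleteEdges (↑E' : Set (Sym2 (Fin n))))
    (hconn : G.Connected)
    (hq : qIndex G > (n : ℝ) - 1)
    (x : Fin n → ℝ) (hx : ∀ v, 0 < x v)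
    (heig : qMatrix G *ᵥ x = qIndex G • x)
    (hY1 : ∃ v, inY n k v ∧ G.degree v = n - 1)
    (i j : Fin n)
    (hi : inY n k i ∧ G.degree i = n - 1)
    (hj : inZ n δ j ∧ G.degree j = n - δ + k - 3) :
    x i > x j := by
  have row : ∀ v, (G.degree v : ℝ) * x v + (∑ u, if G.Adj v u then x u else 0)
      = qIndex G * x v := by
    intro v
    have h := congrFun heig v
    rw [qMatrix_mulVec_apply] at h
    simpa using h
  have hsplit : ∀ v, ∑ u, x u = x v + ∑ u ∈ univ.erase v, x u := fun v =>
    (Finset.add_sum_erase _ _ (mem_univ v)).symm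
  have hn1 : 1 ≤ n := by have := i.2; omega
  -- The vertex `i` has degree `n - 1`, so its neighbours are all the other vertices.
  have hNi : G.neighborFinset i = univ.erase i := by
    apply Finset.eq_of_subset_of_card_le
    · intro u hu
      have := (G.mem_neighborFinset i u).1 hu
      simp [this.ne']
    · rw [G.card_neighborFinset_eq_degree, hi.2, Finset.card_erase_of_mem (mem_univ i)]
      simp
  have hsum : ∀ v, (∑ u, if G.Adj v u then x u else 0) = ∑ u ∈ G.neighborFinset v, x u := by
    intro v
    rw [← Finset.sum_filter]
    apply Finset.sum_congr _ fun _ _ => rfl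
    ext u
    simp
  have hSi : (qIndex G - n + 2) * x i = ∑ u, x u := by
    have h := row i
    rw [hsum, hNi, hi.2, Nat.cast_sub hn1] at h
    rw [hsplit i]
    push_cast at h
    linarith
  have hSj : (qIndex G - G.degree j + 1) * x j ≤ ∑ u, x u := by
    have h := row j
    rw [hsum] at h
    have hle : ∑ u ∈ G.neighborFinset j, x u ≤ ∑ u ∈ univ.erase j, x u := by
      apply Finset.sum_le_sum_of_subset_of_nonneg
      · intro u hu
        have := (G.mem_neighborFinset j u).1 hu
        simp [this.ne']
      · intro u _ _
        exact (hx u).le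
    rw [hsplit j]
    linarith
  -- The vertex with index `k - 1` lies in `X`, hence is not adjacent to `j`.
  have hjZ : δ + 1 ≤ (j : ℕ) := hj.1
  have hdeg : G.degree j + 2 ≤ n := by
    let w : Fin n := ⟨k - 1, by have := j.2; omega⟩
    have hw : ¬ G.Adj j w := by
      rw [hG, SimpleGraph.deleteEdges_adj]
      rintro ⟨h, -⟩
      simp only [graphA, SimpleGraph.fromRel_adj, w] at h
      omega
    have hwj : w ≠ j := by
      intro h
      have : k - 1 = (j : ℕ) := congrArg Fin.val h
      omega
    have hsub : G.neighborFinset j ⊆ (univ.erase j).erase w := by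
      intro u hu
      have hu := (G.mem_neighborFinset j u).1 hu
      refine mem_erase.2 ⟨?_, mem_erase.2 ⟨hu.ne', mem_univ u⟩⟩
      rintro rfl
      exact hw hu
    have hc := Finset.card_le_card hsub
    rw [G.card_neighborFinset_eq_degree,
      Finset.card_erase_of_mem (mem_erase.2 ⟨hwj, mem_univ w⟩),
      Finset.card_erase_of_mem (mem_univ j), Finset.card_univ, Fintype.card_fin] at hc
    have := j.2
    omega
  have hdeg' : (G.degree j : ℝ) + 2 ≤ n := by exact_mod_cast hdeg
  have hlt : (qIndex G - n + 2) * x j < (qIndex G - n + 2) * x i := by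
    rw [hSi]
    refine lt_of_lt_of_le ?_ hSj
    exact mul_lt_mul_of_pos_right (by linarith) (hx j)
  exact lt_of_mul_lt_mul_left hlt (by linarith)

end QGraph
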